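/- Let n ≥ 1 and 1 ≤ m ≤ n. In the hyperoctahedral group B_n, let W_P = {w ∈ B_n : w(j) > 0 for all 1 ≤ j ≤ n} and W_Q = {w ∈ B_n : w({1,…,m}) = {1,…,m}}. Then two elements w, w' ∈ B_n lie in the same (W_P, W_Q) double coset if and only if #{j ∈ {1,…,m} : w(j) > 0} = #{j ∈ {1,…,m} : w'(j) > 0}; consequently the (W_P, W_Q) double cosets are exactly the m+1 sets E_d = {w : #{j ∈ {1,…,m} : w(j) > 0} = d} for 0 ≤ d ≤ m. -/

import Mathlib

/-- The set `{−n, …, −1, 1, …, n}` of signed indices. -/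
def SIdx (n : ℕ) : Type := {x : ℤ // x ≠ 0 ∧ x.natAbs ≤ n}

instance (n : ℕ) : Neg (SIdx n) :=
  ⟨fun x => ⟨-x.1, ⟨neg_ne_zero.mpr x.2.1, by simpa using x.2.2⟩⟩⟩

/-- Membership in the hyperoctahedral group `B_n`: a permutation `w` of
`{−n, …, −1, 1, …, n}` satisfying `w(−x) = −w(x)` for all `x`. -/
def IsSignedPerm {n : ℕ} (w : Equiv.Perm (SIdx n)) : Prop :=
  ∀ x : SIdx n, w (-x) = -(w x)

/-- `W_P = {w ∈ B_n : w(j) > 0 for all 1 ≤ j ≤ n}`. -/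
def InWP {n : ℕ} (h : Equiv.Perm (SIdx n)) : Prop :=
  IsSignedPerm h ∧ ∀ x : SIdx n, 0 < x.1 → 0 < (h x).1

/-- `W_Q = {w ∈ B_n : w({1,…,m}) = {1,…,m}}`. -/
def InWQ {n : ℕ} (m : ℕ) (k : Equiv.Perm (SIdx n)) : Prop :=
  IsSignedPerm k ∧
    ⇑k '' {x : SIdx n | 0 < x.1 ∧ x.1 ≤ (m : ℤ)} = {x : SIdx n | 0 < x.1 ∧ x.1 ≤ (m : ℤ)}

/-- `w` and `w'` lie in the same `(W_P, W_Q)` double coset. -/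
def SameDC {n : ℕ} (m : ℕ) (w w' : Equiv.Perm (SIdx n)) : Prop :=
  ∃ h k : Equiv.Perm (SIdx n), InWP h ∧ InWQ m k ∧ w' = h * w * k

/-- `#{j ∈ {1,…,m} : w(j) > 0}`. -/
noncomputable def posCount {n : ℕ} (m : ℕ) (w : Equiv.Perm (SIdx n)) : ℕ :=
  Set.ncard {x : SIdx n | 0 < x.1 ∧ x.1 ≤ (m : ℤ) ∧ 0 < (w x).1}

namespace SIdx

@[ext] theorem ext' {n : ℕ} {x y : SIdx n} (h : x.1 = y.1) : x = y := Subtype.ext h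

theorem neg_val {n : ℕ} (x : SIdx n) : (-x).1 = -x.1 := rfl

theorem neg_neg' {n : ℕ} (x : SIdx n) : - -x = x := by
  ext; simp [neg_val]

theorem finite (n : ℕ) : Finite (SIdx n) := by
  apply Finite.of_injective (β := Set.Icc (-(n:ℤ)) n)
    (fun x : SIdx n => ⟨x.1, by have := x.2.2; constructor <;> omega⟩)
  intro x y h
  ext
  have h2 := Subtype.ext_iff.1 h
  exact h2

end SIdx

theorem signed_inv {n : ℕ} {w : Equiv.Perm (SIdx n)} (hw : IsSignedPerm w) :
    IsSignedPerm w⁻¹ := by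
  intro x
  apply w.injective
  rw [hw]
  simp

theorem signed_mul {n : ℕ} {w v : Equiv.Perm (SIdx n)} (hw : IsSignedPerm w)
    (hv : IsSignedPerm v) : IsSignedPerm (w * v) := by
  intro x
  simp only [Equiv.Perm.mul_apply]
  rw [hv, hw]

theorem WP_iff {n : ℕ} {h : Equiv.Perm (SIdx n)} (hh : InWP h) (x : SIdx n) :
    0 < (h x).1 ↔ 0 < x.1 := by
  refine ⟨fun hx => ?_, hh.2 x⟩
  by_contra hc
  have h1 := hh.2 (-x) (by have := x.2.1; rw [SIdx.neg_val]; omega)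
  rw [hh.1, SIdx.neg_val] at h1
  omega

theorem count_of_same {n m : ℕ} {w w' : Equiv.Perm (SIdx n)} (h : SameDC m w w') :
    posCount m w = posCount m w' := by
  obtain ⟨h, k, hh, hk, rfl⟩ := h
  unfold posCount
  rw [← Set.ncard_image_of_injective
    {x : SIdx n | 0 < x.1 ∧ x.1 ≤ (m : ℤ) ∧ 0 < ((h * w * k) x).1} k.injective]
  congr 1
  ext y
  have key : ∀ x, (0 < (k x).1 ∧ (k x).1 ≤ (m:ℤ)) ↔ (0 < x.1 ∧ x.1 ≤ (m:ℤ)) := by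
    intro x
    have h1 := Set.ext_iff.1 hk.2 (k x)
    rw [k.injective.mem_set_image] at h1
    exact h1.symm
  simp only [Set.mem_image, Set.mem_ofPred_eq, Equiv.Perm.mul_apply, WP_iff hh]
  constructor
  · rintro ⟨h1, h2, h3⟩
    have := (key (k⁻¹ y)).1 (by simp [h1, h2])
    exact ⟨k⁻¹ y, ⟨this.1, this.2, by simpa using h3⟩, by simp⟩
  · rintro ⟨x, ⟨h1, h2, h3⟩, rfl⟩
    have := (key x).2 ⟨h1, h2⟩
    exact ⟨this.1, this.2, h3⟩

theorem exists_sigma {α : Type*} [Finite α] (I A B : Set α)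
    (h : (I ∩ A).ncard = (I ∩ B).ncard) :
    ∃ s : Equiv.Perm α, ∀ x ∈ I, s x ∈ I ∧ (s x ∈ B ↔ x ∈ A) := by
  classical
  have := Fintype.ofFinite α
  have hc : Nat.card {x : I // x.1 ∈ A} = Nat.card {x : I // x.1 ∈ B} := by
    have aux : ∀ C : Set α, Nat.card {x : I // x.1 ∈ C} = (I ∩ C).ncard := by
      intro C
      rw [← Nat.card_coe_set_eq]
      exact Nat.card_congr (Equiv.subtypeSubtypeEquivSubtypeInter (· ∈ I) (· ∈ C))
    rw [aux, aux, h]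
  let e : {x : I // x.1 ∈ A} ≃ {x : I // x.1 ∈ B} := (Finite.card_eq.1 hc).some
  let s : Equiv.Perm I := e.extendSubtype
  refine ⟨Equiv.Perm.ofSubtype s, fun x hx => ?_⟩
  have e1 : Equiv.Perm.ofSubtype s x = s ⟨x, hx⟩ := Equiv.Perm.ofSubtype_apply_of_mem s hx
  rw [e1]
  refine ⟨(s ⟨x, hx⟩).2, ?_, ?_⟩
  · intro h1
    by_contra h2
    exact e.extendSubtype_not_mem ⟨x, hx⟩ h2 h1
  · intro h1
    exact e.extendSubtype_mem ⟨x, hx⟩ h1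

theorem exists_k {n : ℕ} (m : ℕ) {w w' : Equiv.Perm (SIdx n)} (hw : IsSignedPerm w)
    (hw' : IsSignedPerm w') (hc : posCount m w = posCount m w') :
    ∃ k : Equiv.Perm (SIdx n), InWQ m k ∧ ∀ x, 0 < (w (k x)).1 ↔ 0 < (w' x).1 := by
  classical
  have := SIdx.finite n
  let I : Set (SIdx n) := {x : SIdx n | 0 < x.1 ∧ x.1 ≤ (m : ℤ)}
  have hIn : ∀ x, x ∈ I → -x ∉ I := by
    intro x h1 h2
    have h3 := h1.1
    have h4 := h2.1
    rw [SIdx.neg_val] at h4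
    omega
  have sgn : ∀ (v : Equiv.Perm (SIdx n)), IsSignedPerm v → ∀ x,
      (0 < (v (-x)).1 ↔ ¬ 0 < (v x).1) := by
    intro v hv x
    rw [hv, SIdx.neg_val]
    have := (v x).2.1
    omega
  obtain ⟨s, hs⟩ := exists_sigma I {x | 0 < (w' x).1} {x | 0 < (w x).1} (by
    unfold posCount at hc
    convert hc.symm using 2
    · ext x; simp [I, and_assoc]
    · ext x; simp [I, and_assoc])
  simp only [Set.mem_ofPred_eq] at hs
  let f : SIdx n → SIdx n := fun x =>
    if x ∈ I then s x else if -x ∈ I then -s (-x)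
      else if (0 < (w x).1 ↔ 0 < (w' x).1) then x else -x
  have f1 : ∀ x, x ∈ I → f x = s x := fun x hx => if_pos hx
  have f2 : ∀ x, -x ∈ I → f x = -s (-x) := fun x hx => by
    have : x ∉ I := fun h => hIn x h hx
    simp [f, this, hx]
  have f3 : ∀ x, x ∉ I → -x ∉ I → (0 < (w x).1 ↔ 0 < (w' x).1) → f x = x := by
    intro x h1 h2 h3
    simp [f, h1, h2, h3]
  have f4 : ∀ x, x ∉ I → -x ∉ I → ¬ (0 < (w x).1 ↔ 0 < (w' x).1) → f x = -x := by
    intro x h1 h2 h3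
    simp [f, h1, h2, h3]
  have nn := @SIdx.neg_neg' n
  have hodd : ∀ x, f (-x) = - f x := by
    intro x
    by_cases h1 : x ∈ I
    · rw [f2 (-x) (by rwa [nn]), f1 x h1, nn]
    by_cases h2 : -x ∈ I
    · rw [f1 _ h2, f2 x h2, nn]
    have h1' : - -x ∉ I := by rwa [nn]
    by_cases h3 : (0 < (w x).1 ↔ 0 < (w' x).1)
    · rw [f3 x h1 h2 h3, f3 (-x) h2 h1' (by rw [sgn w hw, sgn w' hw', h3])]
    · rw [f4 x h1 h2 h3, f4 (-x) h2 h1' (by rw [sgn w hw, sgn w' hw']; tauto)]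
  have hsign : ∀ x, 0 < (w (f x)).1 ↔ 0 < (w' x).1 := by
    intro x
    by_cases h1 : x ∈ I
    · rw [f1 x h1]; exact (hs x h1).2
    by_cases h2 : -x ∈ I
    · rw [f2 x h2, sgn w hw, (hs _ h2).2, sgn w' hw', not_not]
    by_cases h3 : (0 < (w x).1 ↔ 0 < (w' x).1)
    · rw [f3 x h1 h2 h3, h3]
    · rw [f4 x h1 h2 h3, sgn w hw]; tauto
  have hI : ∀ x, f x ∈ I ↔ x ∈ I := by
    intro x
    by_cases h1 : x ∈ I
    · rw [f1 x h1]; simp [h1, (hs x h1).1]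
    by_cases h2 : -x ∈ I
    · rw [f2 x h2]; simp [h1, hIn _ (hs _ h2).1]
    by_cases h3 : (0 < (w x).1 ↔ 0 < (w' x).1)
    · rw [f3 x h1 h2 h3]
    · rw [f4 x h1 h2 h3]; simp [h1, h2]
  have ninj : ∀ x y : SIdx n, -x = -y → x = y := by
    intro x y h
    rw [← nn x, h, nn]
  have hinj : Function.Injective f := by
    intro x y hxy
    have a1 : x ∈ I ↔ y ∈ I := by rw [← hI x, ← hI y, hxy]
    have a2 : -x ∈ I ↔ -y ∈ I := by rw [← hI (-x), ← hI (-y), hodd, hodd, hxy]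
    by_cases h1 : x ∈ I
    · rw [f1 x h1, f1 y (a1.1 h1)] at hxy
      exact s.injective hxy
    by_cases h2 : -x ∈ I
    · rw [f2 x h2, f2 y (a2.1 h2)] at hxy
      exact ninj _ _ (s.injective (ninj _ _ hxy))
    have b1 : y ∉ I := by tauto
    have b2 : -y ∉ I := by tauto
    have hs1 : 0 < (w' x).1 ↔ 0 < (w' y).1 := by rw [← hsign, ← hsign, hxy]
    by_cases h3 : (0 < (w x).1 ↔ 0 < (w' x).1) <;>
    by_cases h4 : (0 < (w y).1 ↔ 0 < (w' y).1)
    · rwa [f3 x h1 h2 h3, f3 y b1 b2 h4] at hxy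
    · rw [f3 x h1 h2 h3, f4 y b1 b2 h4] at hxy
      have := sgn w' hw' y
      rw [← hxy] at this
      tauto
    · rw [f4 x h1 h2 h3, f3 y b1 b2 h4] at hxy
      have := sgn w' hw' x
      rw [hxy] at this
      tauto
    · rw [f4 x h1 h2 h3, f4 y b1 b2 h4] at hxy
      exact ninj _ _ hxy
  have hbij : Function.Bijective f := Finite.injective_iff_bijective.1 hinj
  refine ⟨Equiv.ofBijective f hbij, ⟨hodd, ?_⟩, hsign⟩
  change f '' I = I
  ext y
  constructor
  · rintro ⟨x, hx, rfl⟩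
    exact (hI x).2 hx
  · intro hy
    obtain ⟨x, rfl⟩ := hbij.2 y
    exact ⟨x, (hI x).1 hy, rfl⟩

theorem exists_count (n m d : ℕ) (hmn : m ≤ n) (hd : d ≤ m) :
    ∃ w : Equiv.Perm (SIdx n), IsSignedPerm w ∧ posCount m w = d := by
  classical
  let f : SIdx n → SIdx n := fun x => if x.1.natAbs ≤ d then x else -x
  have hv : ∀ x, (f x).1 = if x.1.natAbs ≤ d then x.1 else -x.1 := by
    intro x
    by_cases h : x.1.natAbs ≤ d <;> simp [f, h, SIdx.neg_val]
  have hf : Function.Involutive f := by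
    intro x
    ext
    rw [hv, hv]
    split_ifs <;> omega
  refine ⟨hf.toPerm, ?_, ?_⟩
  · intro x
    change f (-x) = - f x
    ext
    rw [SIdx.neg_val, hv, hv, SIdx.neg_val, Int.natAbs_neg]
    split_ifs <;> rfl
  · unfold posCount
    change Set.ncard {x : SIdx n | 0 < x.1 ∧ x.1 ≤ (m : ℤ) ∧ 0 < (f x).1} = d
    have hinj : Function.Injective (fun x : SIdx n => x.1) := fun x y h => SIdx.ext' h
    rw [← Set.ncard_image_of_injective _ hinj]
    have : (fun x : SIdx n => x.1) '' {x : SIdx n | 0 < x.1 ∧ x.1 ≤ (m : ℤ) ∧ 0 < (f x).1}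
        = ((Finset.Icc (1:ℤ) d : Finset ℤ) : Set ℤ) := by
      ext z
      simp only [Set.mem_image, Set.mem_ofPred_eq, Finset.coe_Icc, Set.mem_Icc]
      constructor
      · rintro ⟨x, ⟨h1, h2, h3⟩, rfl⟩
        rw [hv] at h3
        split_ifs at h3 <;> omega
      · rintro ⟨h1, h2⟩
        obtain ⟨x, hx⟩ : ∃ x : SIdx n, x.1 = z := ⟨⟨z, by omega, by omega⟩, rfl⟩
        refine ⟨x, ⟨by omega, by omega, ?_⟩, hx⟩
        rw [hv, if_pos (by omega)]
        omega
    rw [this, Set.ncard_coe_finset]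
    simp

/-- Two elements of `B_n` lie in the same `(W_P, W_Q)` double coset iff
`#{j ∈ {1,…,m} : w(j) > 0}` agree; the double cosets are exactly the `m+1` sets
`E_d`, `0 ≤ d ≤ m` (each of which is nonempty). -/
theorem stmt_11 (n m : ℕ) (hn : 1 ≤ n) (hm1 : 1 ≤ m) (hmn : m ≤ n) :
    (∀ w w' : Equiv.Perm (SIdx n), IsSignedPerm w → IsSignedPerm w' →
      (SameDC m w w' ↔ posCount m w = posCount m w')) ∧
    (∀ d : ℕ, d ≤ m → ∃ w : Equiv.Perm (SIdx n), IsSignedPerm w ∧ posCount m w = d) := by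
  refine ⟨fun w w' hw hw' => ⟨count_of_same, fun hc => ?_⟩, fun d hd => exists_count n m d hmn hd⟩
  obtain ⟨k, hk, hs⟩ := exists_k m hw hw' hc
  refine ⟨w' * k⁻¹ * w⁻¹, k, ⟨signed_mul (signed_mul hw' (signed_inv hk.1)) (signed_inv hw), ?_⟩,
    hk, by group⟩
  intro x hx
  simp only [Equiv.Perm.mul_apply]
  rw [← hs]
  simpa using hx
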